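/- arXiv:1903.01940 — 2 statements merged into one kernel-verified Lean document; each statement's English description precedes it below -/
import Mathlib

section
/- For all real numbers s, t and every vector w = (w₁,w₂,w₃,w₄) ∈ ℝ⁴, the vector w' = (w₁',w₂',w₃',w₄') = (R_y(s) ⊗ R_y(t)) w satisfies (w₁' − w₄')² + (w₂' + w₃')² = (w₁ − w₄)² + (w₂ + w₃)². (The quantity x₁² + x₂² in Bell coordinates is invariant under local rotation gates, so each torus Σ_d(v₃,v₄) is preserved by R_y ⊗ R_y.) -/
open Matrix Real

/-- Kronecker product of two `2 × 2` real matrices, as a `4 × 4` real matrix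
acting on amplitude vectors `(w₁,w₂,w₃,w₄)` of two-qubit states. -/
noncomputable def kron (A B : Matrix (Fin 2) (Fin 2) ℝ) : Matrix (Fin 4) (Fin 4) ℝ :=
  Matrix.of fun i j =>
    A ⟨i.val / 2, by omega⟩ ⟨j.val / 2, by omega⟩ *
    B ⟨i.val % 2, by omega⟩ ⟨j.val % 2, by omega⟩

/-- The single-qubit rotation gate `R_y(θ)`. -/
noncomputable def Ry (θ : ℝ) : Matrix (Fin 2) (Fin 2) ℝ :=
  !![Real.cos (θ / 2), -Real.sin (θ / 2); Real.sin (θ / 2), Real.cos (θ / 2)]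

open scoped Kronecker

/-! Reading `w` as a `2 × 2` matrix `W`, the operator `A ⊗ B` becomes `W ↦ B W Aᵀ`, and
`w₁ - w₄ + i (w₂ + w₃) = u W uᵀ` for the row vector `u = (1, i)`. Every rotation matrix has `u` as a
left eigenvector, with an eigenvalue of modulus one, so `R_y(s) ⊗ R_y(t)` multiplies this complex
number by a phase. -/

/-- The amplitude vector of a two-qubit state as a `2 × 2` matrix, on which Kronecker products act
by matrix products. Columns are indexed by the first qubit and rows by the second, to match the
column-major convention of `Matrix.vec`. -/
def amplitudeMatrix (w : Fin 4 → ℝ) : Matrix (Fin 2) (Fin 2) ℝ :=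
  !![w 0, w 2; w 1, w 3]

/-- The Bell coordinates `x₁`, `x₂` of `w`, combined into the complex number `√2 (x₁ + i x₂)` so
that local rotation gates act on it by multiplication. The factor `√2` clears the denominators of
the Bell basis. -/
def bellAmplitude (w : Fin 4 → ℝ) : ℂ :=
  ⟨w 0 - w 3, w 1 + w 2⟩

lemma kron_eq_reindex_kronecker (A B : Matrix (Fin 2) (Fin 2) ℝ) :
    kron A B = reindex finProdFinEquiv finProdFinEquiv (A ⊗ₖ B) :=
  rfl

lemma vec_amplitudeMatrix (w : Fin 4 → ℝ) :
    vec (amplitudeMatrix w) = w ∘ finProdFinEquiv := by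
  ext ⟨i, j⟩
  fin_cases i <;> fin_cases j <;> rfl

lemma amplitudeMatrix_kron_mulVec (A B : Matrix (Fin 2) (Fin 2) ℝ) (w : Fin 4 → ℝ) :
    amplitudeMatrix (kron A B *ᵥ w) = B * amplitudeMatrix w * Aᵀ := by
  rw [← vec_inj, ← kronecker_mulVec_vec, vec_amplitudeMatrix, vec_amplitudeMatrix,
    kron_eq_reindex_kronecker, reindex_apply, submatrix_mulVec_equiv, Equiv.symm_symm,
    Function.comp_assoc, Equiv.symm_comp_self, Function.comp_id]

lemma bellAmplitude_eq_dotProduct_mulVec (w : Fin 4 → ℝ) :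
    bellAmplitude w =
      ![1, Complex.I] ⬝ᵥ (amplitudeMatrix w).map Complex.ofRealHom *ᵥ ![1, Complex.I] := by
  apply Complex.ext <;> simp [bellAmplitude, amplitudeMatrix, sub_eq_add_neg, add_comm]

lemma sq_norm_bellAmplitude (w : Fin 4 → ℝ) :
    ‖bellAmplitude w‖ ^ 2 = (w 0 - w 3) ^ 2 + (w 1 + w 2) ^ 2 := by
  rw [Complex.sq_norm, Complex.normSq_apply, bellAmplitude, sq, sq]

lemma bellAmplitude_kron_mulVec {A B : Matrix (Fin 2) (Fin 2) ℝ} {a b : ℂ}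
    (hA : ![1, Complex.I] ᵥ* A.map Complex.ofRealHom = a • ![1, Complex.I])
    (hB : ![1, Complex.I] ᵥ* B.map Complex.ofRealHom = b • ![1, Complex.I]) (w : Fin 4 → ℝ) :
    bellAmplitude (kron A B *ᵥ w) = a * b * bellAmplitude w := by
  have transpose_map_mulVec :
      Aᵀ.map Complex.ofRealHom *ᵥ ![1, Complex.I] = a • ![1, Complex.I] := by
    rw [transpose_map, mulVec_transpose, hA]
  rw [bellAmplitude_eq_dotProduct_mulVec, bellAmplitude_eq_dotProduct_mulVec,
    amplitudeMatrix_kron_mulVec, Matrix.map_mul, Matrix.map_mul, ← mulVec_mulVec, ← mulVec_mulVec,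
    transpose_map_mulVec, mulVec_smul, mulVec_smul, dotProduct_smul, dotProduct_mulVec, hB,
    smul_dotProduct, smul_smul, smul_eq_mul]

lemma vecMul_map_Ry (θ : ℝ) :
    ![1, Complex.I] ᵥ* (Ry θ).map Complex.ofRealHom =
      Complex.exp ((θ / 2 : ℝ) * Complex.I) • ![1, Complex.I] := by
  rw [Complex.exp_mul_I]
  ext i
  fin_cases i
  · simp [Ry, vecMul, dotProduct, mul_comm]
  · simp [Ry, vecMul, dotProduct, add_mul, mul_assoc, mul_comm Complex.I, add_comm]

lemma norm_bellAmplitude_kron_Ry_mulVec (s t : ℝ) (w : Fin 4 → ℝ) :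
    ‖bellAmplitude (kron (Ry s) (Ry t) *ᵥ w)‖ = ‖bellAmplitude w‖ := by
  rw [bellAmplitude_kron_mulVec (vecMul_map_Ry s) (vecMul_map_Ry t), norm_mul, norm_mul,
    Complex.norm_exp_ofReal_mul_I, Complex.norm_exp_ofReal_mul_I, one_mul, one_mul]

theorem stmt_2 (s t : ℝ) (w : Fin 4 → ℝ) (w' : Fin 4 → ℝ)
    (hw' : w' = (kron (Ry s) (Ry t)).mulVec w) :
    (w' 0 - w' 3) ^ 2 + (w' 1 + w' 2) ^ 2
      = (w 0 - w 3) ^ 2 + (w 1 + w 2) ^ 2 := by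
  rw [← sq_norm_bellAmplitude, ← sq_norm_bellAmplitude, hw', norm_bellAmplitude_kron_Ry_mulVec]
end

section
/- Let w = (w₁,w₂,w₃,w₄) be a unit vector in ℝ⁴, let J = [[0,−1],[1,0]], and let I₂ be the 2×2 identity. Then ‖(J ⊗ I₂)w‖² · ‖(I₂ ⊗ J)w‖² − ⟨(J ⊗ I₂)w, (I₂ ⊗ J)w⟩² = 1 − 4(w₁w₄ − w₂w₃)². In particular, writing w₁w₄ − w₂w₃ = cos(2d)/2, this Gram determinant equals sin²(2d), so for sin(2d) ≠ 0 the tangent vectors to the orbit of w under R_y(2s) ⊗ R_y(2t) are linearly independent and the orbit map is an immersion. -/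
/-!
`J` is orthogonal, hence so are `J ⊗ I₂` and `I₂ ⊗ J`, and the two tangent vectors have the norm of
`w`. Since `(J ⊗ I₂)ᵀ (I₂ ⊗ J) = Jᵀ ⊗ J`, their inner product is the value at `w` of the quadratic
form of `Jᵀ ⊗ J`, namely `-2 (w₁ w₄ - w₂ w₃)`.
-/

open Matrix Real

/-- The infinitesimal generator `J = [[0,-1],[1,0]]` of the rotation family `R_y`. -/
def J : Matrix (Fin 2) (Fin 2) ℝ := !![0, -1; 1, 0]

open scoped Kronecker

section Gram

variable {m n p R : Type*} [Fintype m] [Fintype n] [Fintype p] [CommRing R]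

/-- The Gram determinant of two vectors for the standard bilinear form. Over `ℝ` it vanishes exactly
when the vectors are linearly dependent. -/
def gramDet (u v : n → R) : R :=
  (u ⬝ᵥ u) * (v ⬝ᵥ v) - (u ⬝ᵥ v) ^ 2

theorem gramDet_fin_four (u v : Fin 4 → R) :
    gramDet u v =
      (u 0 ^ 2 + u 1 ^ 2 + u 2 ^ 2 + u 3 ^ 2) * (v 0 ^ 2 + v 1 ^ 2 + v 2 ^ 2 + v 3 ^ 2) -
        (u 0 * v 0 + u 1 * v 1 + u 2 * v 2 + u 3 * v 3) ^ 2 := by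
  simp only [gramDet, dotProduct, Fin.sum_univ_four, sq]

theorem mulVec_dotProduct_mulVec (A : Matrix m n R) (B : Matrix m p R) (x : n → R)
    (y : p → R) :
    (A *ᵥ x) ⬝ᵥ (B *ᵥ y) = x ⬝ᵥ (Aᵀ * B) *ᵥ y := by
  rw [← mulVec_mulVec, dotProduct_mulVec x, vecMul_transpose]

variable [DecidableEq n]

theorem mulVec_dotProduct_mulVec_of_mem_orthogonalGroup {A : Matrix n n R}
    (hA : A ∈ orthogonalGroup n R) (x y : n → R) :
    (A *ᵥ x) ⬝ᵥ (A *ᵥ y) = x ⬝ᵥ y := by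
  have hAA : Aᵀ * A = 1 := (mem_orthogonalGroup_iff' n R).mp hA
  rw [mulVec_dotProduct_mulVec, hAA, one_mulVec]

theorem gramDet_mulVec_mulVec_of_mem_orthogonalGroup {A B : Matrix n n R}
    (hA : A ∈ orthogonalGroup n R) (hB : B ∈ orthogonalGroup n R) (x : n → R) :
    gramDet (A *ᵥ x) (B *ᵥ x) = (x ⬝ᵥ x) ^ 2 - (x ⬝ᵥ (Aᵀ * B) *ᵥ x) ^ 2 := by
  rw [gramDet, mulVec_dotProduct_mulVec_of_mem_orthogonalGroup hA,
    mulVec_dotProduct_mulVec_of_mem_orthogonalGroup hB, mulVec_dotProduct_mulVec, sq (x ⬝ᵥ x)]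

end Gram

section Kron

theorem kron_eq_submatrix_kronecker (A B : Matrix (Fin 2) (Fin 2) ℝ) :
    kron A B = (A ⊗ₖ B).submatrix finProdFinEquiv.symm finProdFinEquiv.symm :=
  rfl

theorem kron_one_one : kron 1 1 = 1 := by
  rw [kron_eq_submatrix_kronecker, one_kronecker_one, submatrix_one_equiv]

theorem kron_transpose (A B : Matrix (Fin 2) (Fin 2) ℝ) : (kron A B)ᵀ = kron Aᵀ Bᵀ :=
  rfl

theorem kron_mul_kron (A B C D : Matrix (Fin 2) (Fin 2) ℝ) :
    kron A B * kron C D = kron (A * C) (B * D) := by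
  simp only [kron_eq_submatrix_kronecker, submatrix_mul_equiv, mul_kronecker_mul]

theorem kron_mem_orthogonalGroup {A B : Matrix (Fin 2) (Fin 2) ℝ}
    (hA : A ∈ orthogonalGroup (Fin 2) ℝ) (hB : B ∈ orthogonalGroup (Fin 2) ℝ) :
    kron A B ∈ orthogonalGroup (Fin 4) ℝ := by
  have hAA : A * Aᵀ = 1 := (mem_orthogonalGroup_iff _ _).mp hA
  have hBB : B * Bᵀ = 1 := (mem_orthogonalGroup_iff _ _).mp hB
  rw [mem_orthogonalGroup_iff, kron_transpose, kron_mul_kron, hAA, hBB, kron_one_one]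

end Kron

theorem J_mem_orthogonalGroup : _root_.J ∈ orthogonalGroup (Fin 2) ℝ := by
  refine (mem_orthogonalGroup_iff _ _).mpr ?_
  ext i j
  fin_cases i <;> fin_cases j <;> simp [_root_.J, mul_apply]

theorem kron_transpose_J_J :
    kron Jᵀ J = !![0, 0, 0, -1; 0, 0, 1, 0; 0, 1, 0, 0; -1, 0, 0, 0] := by
  ext i j
  fin_cases i <;> fin_cases j <;> simp [kron, _root_.J]

theorem dotProduct_kron_transpose_J_J_mulVec (w : Fin 4 → ℝ) :
    w ⬝ᵥ kron Jᵀ J *ᵥ w = -2 * (w 0 * w 3 - w 1 * w 2) := by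
  have hw : kron Jᵀ J *ᵥ w = ![-w 3, w 2, w 1, -w 0] := by
    ext i
    fin_cases i <;> simp [kron_transpose_J_J, mulVec, dotProduct, Fin.sum_univ_four]
  simp only [hw, dotProduct, Fin.sum_univ_four, cons_val]
  ring

theorem gramDet_kron_J_one_mulVec_kron_one_J_mulVec (w : Fin 4 → ℝ) :
    gramDet (kron J 1 *ᵥ w) (kron 1 J *ᵥ w) =
      (w ⬝ᵥ w) ^ 2 - 4 * (w 0 * w 3 - w 1 * w 2) ^ 2 := by
  have hJ₁ : kron J 1 ∈ orthogonalGroup (Fin 4) ℝ :=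
    kron_mem_orthogonalGroup J_mem_orthogonalGroup (one_mem _)
  have hJ₂ : kron 1 J ∈ orthogonalGroup (Fin 4) ℝ :=
    kron_mem_orthogonalGroup (one_mem _) J_mem_orthogonalGroup
  have hJJ : (kron J 1)ᵀ * kron 1 J = kron Jᵀ J := by
    rw [kron_transpose, kron_mul_kron, transpose_one, mul_one, one_mul]
  rw [gramDet_mulVec_mulVec_of_mem_orthogonalGroup hJ₁ hJ₂, hJJ,
    dotProduct_kron_transpose_J_J_mulVec]
  ring

theorem stmt_17 (w : Fin 4 → ℝ)
    (hw : w 0 ^ 2 + w 1 ^ 2 + w 2 ^ 2 + w 3 ^ 2 = 1)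
    (u v : Fin 4 → ℝ)
    (hu : u = (kron J 1).mulVec w) (hv : v = (kron 1 J).mulVec w) :
    ((u 0 ^ 2 + u 1 ^ 2 + u 2 ^ 2 + u 3 ^ 2) *
        (v 0 ^ 2 + v 1 ^ 2 + v 2 ^ 2 + v 3 ^ 2)
      - (u 0 * v 0 + u 1 * v 1 + u 2 * v 2 + u 3 * v 3) ^ 2
      = 1 - 4 * (w 0 * w 3 - w 1 * w 2) ^ 2) ∧
    ∀ d : ℝ, w 0 * w 3 - w 1 * w 2 = Real.cos (2 * d) / 2 →
      (u 0 ^ 2 + u 1 ^ 2 + u 2 ^ 2 + u 3 ^ 2) *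
          (v 0 ^ 2 + v 1 ^ 2 + v 2 ^ 2 + v 3 ^ 2)
        - (u 0 * v 0 + u 1 * v 1 + u 2 * v 2 + u 3 * v 3) ^ 2
        = Real.sin (2 * d) ^ 2 := by
  have hww : w ⬝ᵥ w = 1 := by
    simpa only [dotProduct, Fin.sum_univ_four, ← sq] using hw
  have hgram : gramDet u v = 1 - 4 * (w 0 * w 3 - w 1 * w 2) ^ 2 := by
    rw [hu, hv, gramDet_kron_J_one_mulVec_kron_one_J_mulVec, hww, one_pow]
  rw [← gramDet_fin_four]
  refine ⟨hgram, fun d hd => ?_⟩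
  rw [hgram, hd, sin_sq]
  ring
end
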